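/- There exists a smooth, strictly monotone bijection φ : ℝ → ℝ (a diffeomorphism of ℝ) such that φ(x) = x for all x with |x| ≥ 1, and φ vanishes to infinite order at the origin, i.e., φ(0) = 0 and the n-th derivative of φ at 0 equals 0 for every n ≥ 1. -/

import Mathlib

/-!
Multiplying the identity by a smooth step that is `0` on `(-∞, 0]` and `1` on `[1, ∞)` gives a
smooth function `f` which is strictly increasing on `[0, ∞)` and agrees with the identity on
`[1, ∞)`. All its derivatives vanish on `(-∞, 0)`, hence at `0` by continuity. The odd function
`f x - f (-x)` equals `f` on `[0, ∞)`, so it is strictly increasing there and, by oddness,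
everywhere; likewise it is the identity where `1 ≤ |x|`. It inherits smoothness and the flat point
at `0`.
-/

open Set Filter

theorem iteratedDeriv_eqOn_closure_of_isOpen {𝕜 F : Type*} [NontriviallyNormedField 𝕜]
    [NormedAddCommGroup F] [NormedSpace 𝕜 F] {f g : 𝕜 → F} {s : Set 𝕜} {n : ℕ} (hs : IsOpen s)
    (hf : ContDiff 𝕜 n f) (hg : ContDiff 𝕜 n g) (h : EqOn f g s) :
    EqOn (iteratedDeriv n f) (iteratedDeriv n g) (closure s) :=
  (h.iteratedDeriv_of_isOpen hs n).closure (hf.continuous_iteratedDeriv n le_rfl)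
    (hg.continuous_iteratedDeriv n le_rfl)

theorem surjective_of_continuous_of_eventuallyEq_id {α : Type*} [ConditionallyCompleteLinearOrder α]
    [DenselyOrdered α] [TopologicalSpace α] [OrderTopology α] {f : α → α} (hf : Continuous f)
    (h_top : f =ᶠ[atTop] id) (h_bot : f =ᶠ[atBot] id) : Function.Surjective f :=
  hf.surjective (tendsto_id.congr' h_top.symm) (tendsto_id.congr' h_bot.symm)

/-- The odd function `x ↦ f x - f (-x)`. If `f` vanishes on `(-∞, 0]`, it is the odd extension of
the restriction of `f` to `[0, ∞)`; this formula makes it visibly as smooth as `f`. -/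
def oddExtension {α β : Type*} [Neg α] [Sub β] (f : α → β) (x : α) : β :=
  f x - f (-x)

namespace oddExtension

theorem odd {α β : Type*} [InvolutiveNeg α] [SubtractionMonoid β] (f : α → β) :
    Function.Odd (oddExtension f) := fun x => by
  simp [oddExtension]

theorem apply_zero {α β : Type*} [NegZeroClass α] [AddGroup β] (f : α → β) :
    oddExtension f 0 = 0 := by
  simp [oddExtension]

section Order

variable {G H : Type*} [AddCommGroup G] [LinearOrder G] [IsOrderedAddMonoid G]

theorem apply_of_nonneg [AddGroup H] {f : G → H} (hf : ∀ x ≤ 0, f x = 0) {x : G} (hx : 0 ≤ x) :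
    oddExtension f x = f x := by
  rw [oddExtension, hf (-x) (neg_nonpos.2 hx), sub_zero]

theorem strictMono [AddCommGroup H] [PartialOrder H] [IsOrderedAddMonoid H] {f : G → H}
    (hf : ∀ x ≤ 0, f x = 0) (hmono : StrictMonoOn f (Ici 0)) : StrictMono (oddExtension f) :=
  strictMono_of_odd_strictMonoOn_nonneg (odd f) <|
    hmono.congr fun _ hx => (apply_of_nonneg hf hx).symm

theorem apply_eq_self_of_le_abs {f : G → G} {r : G} (hf : ∀ x ≤ 0, f x = 0)
    (hid : ∀ x, r ≤ x → f x = x) {x : G} (hx : r ≤ |x|) : oddExtension f x = x := by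
  have h_abs : oddExtension f |x| = |x| := by rw [apply_of_nonneg hf (abs_nonneg x), hid _ hx]
  rcases abs_choice x with h | h
  · rwa [h] at h_abs
  · rwa [h, odd f, neg_inj] at h_abs

end Order

section Calculus

variable {𝕜 F : Type*} [NontriviallyNormedField 𝕜] [NormedAddCommGroup F] [NormedSpace 𝕜 F]
  {f : 𝕜 → F}

theorem contDiff {n : WithTop ℕ∞} (hf : ContDiff 𝕜 n f) : ContDiff 𝕜 n (oddExtension f) :=
  hf.sub (hf.comp contDiff_neg)

theorem iteratedDeriv_apply {n : ℕ} (hf : ContDiff 𝕜 n f) (x : 𝕜) :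
    iteratedDeriv n (oddExtension f) x =
      iteratedDeriv n f x - (-1 : 𝕜) ^ n • iteratedDeriv n f (-x) := by
  rw [← iteratedDeriv_comp_neg]
  exact iteratedDeriv_fun_sub hf.contDiffAt (hf.comp contDiff_neg).contDiffAt

end Calculus

end oddExtension

/-- A smooth ramp: it vanishes on `(-∞, 0]` and is the identity on `[1, ∞)`. -/
noncomputable def smoothRamp (x : ℝ) : ℝ :=
  x * Real.smoothTransition x

namespace smoothRamp

theorem contDiff {n : ℕ∞} : ContDiff ℝ n smoothRamp :=
  contDiff_id.mul Real.smoothTransition.contDiff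

theorem zero_of_nonpos {x : ℝ} (hx : x ≤ 0) : smoothRamp x = 0 := by
  rw [smoothRamp, Real.smoothTransition.zero_of_nonpos hx, mul_zero]

theorem eq_self_of_one_le {x : ℝ} (hx : 1 ≤ x) : smoothRamp x = x := by
  rw [smoothRamp, Real.smoothTransition.one_of_one_le hx, mul_one]

theorem strictMonoOn : StrictMonoOn smoothRamp (Ici 0) := fun _ hx _ _ hxy =>
  mul_lt_mul_of_lt_of_le_of_nonneg_of_pos hxy (Real.smoothTransition.monotone hxy.le) hx
    (Real.smoothTransition.pos_of_pos (hx.trans_lt hxy))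

theorem iteratedDeriv_zero (n : ℕ) : iteratedDeriv n smoothRamp 0 = 0 := by
  have h_eqOn : EqOn smoothRamp (fun _ => 0) (Iio 0) := fun _ hx => zero_of_nonpos (le_of_lt hx)
  have h_mem : (0 : ℝ) ∈ closure (Iio 0) := by simp
  simpa using
    iteratedDeriv_eqOn_closure_of_isOpen (n := n) isOpen_Iio contDiff contDiff_const h_eqOn h_mem

end smoothRamp

/-- There exists a diffeomorphism of ℝ (a smooth, strictly monotone bijection)
equal to the identity outside `[-1, 1]` and vanishing to infinite order at `0`. -/
theorem exists_diffeo_id_outside_vanishing_infinite_order :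
    ∃ φ : ℝ → ℝ, ContDiff ℝ (⊤ : ℕ∞) φ ∧ StrictMono φ ∧ Function.Bijective φ ∧
      (∀ x : ℝ, 1 ≤ |x| → φ x = x) ∧
      φ 0 = 0 ∧ ∀ n : ℕ, 1 ≤ n → iteratedDeriv n φ 0 = 0 := by
  have h_zero : ∀ x ≤ 0, smoothRamp x = 0 := fun _ => smoothRamp.zero_of_nonpos
  have h_smooth : ContDiff ℝ (⊤ : ℕ∞) (oddExtension smoothRamp) :=
    oddExtension.contDiff smoothRamp.contDiff
  have h_mono : StrictMono (oddExtension smoothRamp) :=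
    oddExtension.strictMono h_zero smoothRamp.strictMonoOn
  have h_id : ∀ x : ℝ, 1 ≤ |x| → oddExtension smoothRamp x = x := fun _ =>
    oddExtension.apply_eq_self_of_le_abs h_zero fun _ => smoothRamp.eq_self_of_one_le
  have h_surj : Function.Surjective (oddExtension smoothRamp) :=
    surjective_of_continuous_of_eventuallyEq_id h_smooth.continuous
      ((tendsto_abs_atTop_atTop.eventually_ge_atTop 1).mono h_id)
      ((tendsto_abs_atBot_atTop.eventually_ge_atTop 1).mono h_id)
  refine ⟨oddExtension smoothRamp, h_smooth, h_mono, ⟨h_mono.injective, h_surj⟩, h_id,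
    oddExtension.apply_zero smoothRamp, fun n _ => ?_⟩
  rw [oddExtension.iteratedDeriv_apply smoothRamp.contDiff, neg_zero,
    smoothRamp.iteratedDeriv_zero, smul_zero, sub_zero]
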